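/- arXiv:2207.04620 — 2 statements merged into one kernel-verified Lean document; each statement's English description precedes it below -/
import Mathlib

section
/- For every integer d ≥ 1 and every real m ∈ [0, 1], it holds that 0 ≤ 1 − g_d(m) ≤ 2^d·(1 − m)^{d+1}. -/
noncomputable def g (d : ℕ) : ℝ → ℝ :=
  fun m => ∑ i ∈ Finset.range (d + 1),
    (1 / 4 ^ i : ℝ) * (Nat.choose (2 * i) i) * (m * (1 - m ^ 2) ^ i)

/-!
As `∑ i, C(2i, i) / 4 ^ i * t ^ i` is the Taylor series of `(1 - t) ^ (-1/2)`, the polynomial `g d`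
is `m` times a truncated expansion of `1 / m = (1 - (1 - m ^ 2)) ^ (-1/2)`. Its derivative
telescopes to the single term `(2d + 1) * C(2d, d) / 4 ^ d * (1 - m ^ 2) ^ d`, which on `[-1, 1]`
lies between `0` and `2 ^ d * (d + 1) * (1 - m) ^ d`, the negated derivative of
`2 ^ d * (1 - m) ^ (d + 1)`. Both bounds follow by comparison with the value `g d 1 = 1`.
-/

open Set

/-- The coefficient of `t ^ i` in the Taylor series of `(1 - t) ^ (-1/2)` at `0`. These are the
coefficients in `g`. -/
noncomputable def invSqrtCoeff (i : ℕ) : ℝ :=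
  i.centralBinom / 4 ^ i

lemma invSqrtCoeff_nonneg (i : ℕ) : 0 ≤ invSqrtCoeff i := by
  unfold invSqrtCoeff
  positivity

lemma two_mul_add_one_mul_invSqrtCoeff_succ (i : ℕ) :
    2 * (i + 1) * invSqrtCoeff (i + 1) = (2 * i + 1) * invSqrtCoeff i := by
  have h : ((i : ℝ) + 1) * (i + 1).centralBinom = 2 * (2 * i + 1) * i.centralBinom := by
    exact_mod_cast i.succ_mul_centralBinom_succ
  rw [invSqrtCoeff, invSqrtCoeff, pow_succ]
  field_simp
  linear_combination 2 * h

lemma two_mul_add_one_mul_centralBinom_le (d : ℕ) :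
    (2 * d + 1) * d.centralBinom ≤ (d + 1) * 4 ^ d :=
  calc (2 * d + 1) * d.centralBinom
      = (2 * d + 1).choose (d + 1) * (d + 1) := Nat.add_one_mul_choose_eq (2 * d) d
    _ = (d + 1) * (2 * d + 1).choose d := by rw [Nat.choose_symm_half, mul_comm]
    _ ≤ (d + 1) * 4 ^ d := by gcongr; exact Nat.choose_middle_le_pow d

lemma two_mul_add_one_mul_invSqrtCoeff_le (d : ℕ) : (2 * d + 1) * invSqrtCoeff d ≤ d + 1 := by
  rw [invSqrtCoeff, ← mul_div_assoc, div_le_iff₀ (by positivity)]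
  exact_mod_cast two_mul_add_one_mul_centralBinom_le d

lemma g_eq_sum_invSqrtCoeff (d : ℕ) (m : ℝ) :
    g d m = ∑ i ∈ Finset.range (d + 1), invSqrtCoeff i * (m * (1 - m ^ 2) ^ i) := by
  simp only [g, invSqrtCoeff, Nat.centralBinom, one_div_mul_eq_div]

lemma g_zero (m : ℝ) : g 0 m = m := by
  simp [g]

lemma g_succ (d : ℕ) (m : ℝ) :
    g (d + 1) m = g d m + invSqrtCoeff (d + 1) * (m * (1 - m ^ 2) ^ (d + 1)) := by
  simp only [g_eq_sum_invSqrtCoeff, Finset.sum_range_succ _ (d + 1)]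

lemma g_one (d : ℕ) : g d 1 = 1 := by
  induction d with
  | zero => exact g_zero 1
  | succ d ih => simp [g_succ, ih]

lemma hasDerivAt_mul_one_sub_sq_pow (n : ℕ) (x : ℝ) :
    HasDerivAt (fun m : ℝ => m * (1 - m ^ 2) ^ (n + 1))
      ((2 * (n + 1) + 1) * (1 - x ^ 2) ^ (n + 1) - 2 * (n + 1) * (1 - x ^ 2) ^ n) x := by
  have h : HasDerivAt (fun m : ℝ => 1 - m ^ 2) (-(2 * x)) x := by
    simpa using (hasDerivAt_pow 2 x).const_sub 1
  refine ((hasDerivAt_id' x).fun_mul (h.fun_pow (n + 1))).congr_deriv ?_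
  push_cast
  ring

lemma hasDerivAt_g (d : ℕ) (x : ℝ) :
    HasDerivAt (g d) ((2 * d + 1) * invSqrtCoeff d * (1 - x ^ 2) ^ d) x := by
  induction d with
  | zero => simpa [funext g_zero, invSqrtCoeff] using hasDerivAt_id' x
  | succ d ih =>
    rw [funext (g_succ d)]
    refine (ih.fun_add ((hasDerivAt_mul_one_sub_sq_pow d x).const_mul _)).congr_deriv ?_
    push_cast
    linear_combination -(1 - x ^ 2) ^ d * two_mul_add_one_mul_invSqrtCoeff_succ d

lemma hasDerivAt_one_sub_pow_succ (d : ℕ) (x : ℝ) :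
    HasDerivAt (fun m : ℝ => (1 - m) ^ (d + 1)) (-((d + 1) * (1 - x) ^ d)) x := by
  simpa using ((hasDerivAt_id' x).const_sub 1).fun_pow (d + 1)

lemma deriv_g_nonneg (d : ℕ) {x : ℝ} (hx : x ∈ Icc (-1 : ℝ) 1) : 0 ≤ deriv (g d) x := by
  have hsq : 0 ≤ 1 - x ^ 2 := sub_nonneg.2 ((sq_le_one_iff_abs_le_one x).2 (abs_le.2 hx))
  have ha := invSqrtCoeff_nonneg d
  rw [(hasDerivAt_g d x).deriv]
  positivity

lemma deriv_g_le (d : ℕ) {x : ℝ} (hx : x ∈ Icc (-1 : ℝ) 1) :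
    deriv (g d) x ≤ 2 ^ d * ((d + 1) * (1 - x) ^ d) := by
  have h_add : 0 ≤ 1 + x := by linarith [hx.1]
  have h_sub : 0 ≤ 1 - x := by linarith [hx.2]
  calc deriv (g d) x
      = (2 * d + 1) * invSqrtCoeff d * ((1 + x) ^ d * (1 - x) ^ d) := by
        rw [(hasDerivAt_g d x).deriv, ← mul_pow]
        ring
    _ ≤ (d + 1) * (2 ^ d * (1 - x) ^ d) := by
        gcongr
        · exact two_mul_add_one_mul_invSqrtCoeff_le d
        · linarith [hx.2]
    _ = 2 ^ d * ((d + 1) * (1 - x) ^ d) := by ring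

lemma differentiable_g (d : ℕ) : Differentiable ℝ (g d) :=
  fun x => (hasDerivAt_g d x).differentiableAt

lemma monotoneOn_g (d : ℕ) : MonotoneOn (g d) (Icc (-1) 1) :=
  monotoneOn_of_deriv_nonneg (convex_Icc _ _) (differentiable_g d).continuous.continuousOn
    (differentiable_g d).differentiableOn fun _ hx => deriv_g_nonneg d (interior_subset hx)

lemma antitoneOn_g_add_two_pow_mul_one_sub_pow_succ (d : ℕ) :
    AntitoneOn (fun m => g d m + 2 ^ d * (1 - m) ^ (d + 1)) (Icc (-1) 1) := by
  have hderiv (x : ℝ) := (differentiable_g d x).hasDerivAt.fun_add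
    ((hasDerivAt_one_sub_pow_succ d x).const_mul (2 ^ d))
  refine antitoneOn_of_hasDerivWithinAt_nonpos (convex_Icc _ _)
    (fun x _ => (hderiv x).continuousAt.continuousWithinAt)
    (fun x _ => (hderiv x).hasDerivWithinAt) fun x hx => ?_
  linarith [deriv_g_le d (interior_subset hx)]

theorem stmt_4_general (d : ℕ) {m : ℝ} (hm : m ∈ Icc (-1 : ℝ) 1) :
    0 ≤ 1 - g d m ∧ 1 - g d m ≤ 2 ^ d * (1 - m) ^ (d + 1) := by
  have h_one : (1 : ℝ) ∈ Icc (-1 : ℝ) 1 := by norm_num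
  constructor
  · have hle : g d m ≤ g d 1 := monotoneOn_g d hm h_one hm.2
    rwa [g_one, ← sub_nonneg] at hle
  · have hle : g d 1 + 2 ^ d * (1 - 1) ^ (d + 1) ≤ g d m + 2 ^ d * (1 - m) ^ (d + 1) :=
      antitoneOn_g_add_two_pow_mul_one_sub_pow_succ d hm h_one hm.2
    rw [g_one, sub_self, zero_pow d.succ_ne_zero] at hle
    linarith

theorem stmt_4 (d : ℕ) (hd : 1 ≤ d) (m : ℝ) (hm : m ∈ Set.Icc (0 : ℝ) 1) :
    0 ≤ 1 - g d m ∧ 1 - g d m ≤ 2 ^ d * (1 - m) ^ (d + 1) :=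
  stmt_4_general d (Icc_subset_Icc_left (by norm_num) hm)
end

section
/- Let R be a commutative ring, and let t, h be positive integers with t dividing h. Let A be a t×h matrix over R and B an h×h matrix over R, and let Ã be the h×h matrix obtained by vertically stacking h/t copies of A, i.e., Ã_{r,c} = A_{r mod t, c}. Define the h×h matrix M = Σ_{i=0}^{t−1} (φ^i(μ(Ã))) ⊙ (π^i(ζ(B))). Then for all 0 ≤ s < t and 0 ≤ c < h, (A·B)_{s,c} = Σ_{j=0}^{h/t−1} M_{j·t+s, c}. -/
/-- `μ(A)_{i,j} = A_{i, i+j}` -/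
def matMu {h : ℕ} {R : Type*} (A : Matrix (ZMod h) (ZMod h) R) :
    Matrix (ZMod h) (ZMod h) R :=
  fun i j => A i (i + j)

/-- `ζ(A)_{i,j} = A_{i+j, j}` -/
def matZeta {h : ℕ} {R : Type*} (A : Matrix (ZMod h) (ZMod h) R) :
    Matrix (ZMod h) (ZMod h) R :=
  fun i j => A (i + j) j

/-- `φ(A)_{i,j} = A_{i, j+1}` -/
def matPhi {h : ℕ} {R : Type*} (A : Matrix (ZMod h) (ZMod h) R) :
    Matrix (ZMod h) (ZMod h) R :=
  fun i j => A i (j + 1)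

/-- `π(A)_{i,j} = A_{i+1, j}` -/
def matPi {h : ℕ} {R : Type*} (A : Matrix (ZMod h) (ZMod h) R) :
    Matrix (ZMod h) (ZMod h) R :=
  fun i j => A (i + 1) j

/-- vertical stacking of `h/t` copies of a `t × h` matrix `A`:
`Ã_{r,c} = A_{r mod t, c}`. -/
def stacked {t h : ℕ} {R : Type*} (A : Matrix (ZMod t) (ZMod h) R) :
    Matrix (ZMod h) (ZMod h) R :=
  fun r c => A ((r.val : ZMod t)) c

/-!
The `(r, c)` entry of the `i`-th Hadamard product is `Ã_{r, r+c+i} * B_{r+c+i, c}`, a single term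
of the inner product of row `r` of `Ã` with column `c` of `B`. Hence `M_{r, c}` collects the terms
whose summation index lies in the window of `t` consecutive residues starting at `r + c`. The rows
`r = j * t + s` of `Ã` are all equal to row `s` of `A`, and as `j` varies their windows tile `ℤ/hℤ`.
-/

theorem sum_range_mul_eq_sum_sum {M : Type*} [AddCommMonoid M] (m t : ℕ) (f : ℕ → M) :
    ∑ k ∈ Finset.range (m * t), f k =
      ∑ j ∈ Finset.range m, ∑ i ∈ Finset.range t, f (j * t + i) := by
  induction m with
  | zero => simp
  | succ m ih => rw [Nat.succ_mul, Finset.sum_range_add, ih, Finset.sum_range_succ]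

section ZMod

variable {M : Type*} [AddCommMonoid M] {t h : ℕ} [NeZero h]

theorem sum_range_natCast_zmod (f : ZMod h → M) :
    ∑ k ∈ Finset.range h, f k = ∑ x, f x :=
  Finset.sum_nbij' (fun k => (k : ZMod h)) ZMod.val (by simp)
    (fun x _ => Finset.mem_range.mpr x.val_lt)
    (fun _ hk => ZMod.val_cast_of_lt (Finset.mem_range.mp hk)) (by simp) (by simp)

theorem sum_zmod_eq_sum_windows (hdvd : t ∣ h) (a : ZMod h) (f : ZMod h → M) :
    ∑ x, f x =
      ∑ j ∈ Finset.range (h / t), ∑ i ∈ Finset.range t, f (a + (j * t + i : ℕ)) :=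
  calc ∑ x, f x
    _ = ∑ x, f (a + x) := (Equiv.sum_comp (Equiv.addLeft a) f).symm
    _ = ∑ k ∈ Finset.range (h / t * t), f (a + k) := by
      rw [Nat.div_mul_cancel hdvd, sum_range_natCast_zmod fun x => f (a + x)]
    _ = _ := sum_range_mul_eq_sum_sum (h / t) t fun k => f (a + k)

end ZMod

section Permutations

variable {R : Type*} {t h : ℕ}

theorem iterate_matPhi_apply (A : Matrix (ZMod h) (ZMod h) R) (n : ℕ) (r c : ZMod h) :
    matPhi^[n] A r c = A r (c + n) := by
  induction n generalizing A with
  | zero => simp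
  | succ n ih => rw [Function.iterate_succ_apply, ih, matPhi, Nat.cast_succ, add_assoc]

theorem iterate_matPi_apply (A : Matrix (ZMod h) (ZMod h) R) (n : ℕ) (r c : ZMod h) :
    matPi^[n] A r c = A (r + n) c := by
  induction n generalizing A with
  | zero => simp
  | succ n ih => rw [Function.iterate_succ_apply, ih, matPi, Nat.cast_succ, add_assoc]

theorem stacked_natCast [NeZero h] (hdvd : t ∣ h) (A : Matrix (ZMod t) (ZMod h) R)
    (k : ℕ) (c : ZMod h) : stacked A k c = A k c := by
  rw [stacked, ZMod.natCast_val, ZMod.cast_natCast hdvd]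

theorem hadamard_iterate_matPhi_iterate_matPi_apply [Mul R]
    (A B : Matrix (ZMod h) (ZMod h) R) (i : ℕ) (r c : ZMod h) :
    Matrix.hadamard (matPhi^[i] (matMu A)) (matPi^[i] (matZeta B)) r c =
      A r (r + c + i) * B (r + c + i) c := by
  rw [Matrix.hadamard_apply, iterate_matPhi_apply, iterate_matPi_apply, matMu, matZeta,
    ← add_assoc, add_right_comm r]

end Permutations

theorem stmt_17_general {R : Type*} [NonUnitalNonAssocSemiring R] {t h : ℕ} [NeZero h]
    (hdvd : t ∣ h) (A : Matrix (ZMod t) (ZMod h) R) (B : Matrix (ZMod h) (ZMod h) R)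
    (s : ℕ) (c : ZMod h) :
    (A * B) s c =
      ∑ j ∈ Finset.range (h / t),
        (∑ i ∈ Finset.range t,
            Matrix.hadamard (matPhi^[i] (matMu (stacked A))) (matPi^[i] (matZeta B)))
          ((j * t + s : ℕ) : ZMod h) c := by
  rw [Matrix.mul_apply, sum_zmod_eq_sum_windows hdvd (s + c)]
  refine Finset.sum_congr rfl fun j _ => ?_
  rw [Matrix.sum_apply]
  refine Finset.sum_congr rfl fun i _ => ?_
  have row_eq : ((j * t + s : ℕ) : ZMod t) = s := by simp
  have window_eq : (s + c + (j * t + i : ℕ) : ZMod h) = (j * t + s : ℕ) + c + i := by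
    push_cast
    ring
  rw [hadamard_iterate_matPhi_iterate_matPi_apply, stacked_natCast hdvd, row_eq, window_eq]

theorem stmt_17 (R : Type*) [CommRing R] (t h : ℕ) [NeZero t] [NeZero h]
    (hdvd : t ∣ h)
    (A : Matrix (ZMod t) (ZMod h) R) (B : Matrix (ZMod h) (ZMod h) R)
    (s c : ℕ) (hs : s < t) (hc : c < h) :
    (A * B) ((s : ZMod t)) ((c : ZMod h)) =
      ∑ j ∈ Finset.range (h / t),
        (∑ i ∈ Finset.range t,
            Matrix.hadamard (matPhi^[i] (matMu (stacked A))) (matPi^[i] (matZeta B)))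
          (((j * t + s : ℕ) : ZMod h)) ((c : ZMod h)) :=
  stmt_17_general hdvd A B s c
end
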